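/- Let F be a 3-satisfiable weighted CNF formula. Then there exists a subset U of V(F) and a truth assignment tau such that sat_tau(F) >= (2/3) w(F) + (1/3) w(F_U) + (2/453) |V(F \ F_U)|, where F_U is the set of clauses containing a variable of U. -/

import Mathlib

open Classical

/-- A clause: a finite set of literals, each a (variable, polarity) pair. -/
abbrev Clause := Finset (ℕ × Bool)

/-- A truth assignment satisfies a clause if some literal evaluates to true. -/
def SatC (τ : ℕ → Bool) (C : Clause) : Prop := ∃ l ∈ C, τ l.1 = l.2

/-- A CNF formula: clauses are nonempty and contain no variable together with its negation. -/
def IsCNF (F : Finset Clause) : Prop :=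
  ∀ C ∈ F, C.Nonempty ∧ ∀ v : ℕ, ¬((v, true) ∈ C ∧ (v, false) ∈ C)

/-- Total weight of a set of clauses. -/
def wt (w : Clause → ℕ) (G : Finset Clause) : ℕ := ∑ C ∈ G, w C

/-- Total weight of the clauses of `G` satisfied by `τ`. -/
noncomputable def satWt (w : Clause → ℕ) (τ : ℕ → Bool) (G : Finset Clause) : ℕ :=
  ∑ C ∈ G.filter (fun C => SatC τ C), w C

/-- `F` is 2-satisfiable. -/
def Sat2 (F : Finset Clause) : Prop :=
  ∀ C1 ∈ F, ∀ C2 ∈ F, ∃ τ, SatC τ C1 ∧ SatC τ C2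

/-- `F` is 3-satisfiable. -/
def Sat3 (F : Finset Clause) : Prop :=
  ∀ C1 ∈ F, ∀ C2 ∈ F, ∀ C3 ∈ F, ∃ τ, SatC τ C1 ∧ SatC τ C2 ∧ SatC τ C3

/-- The set of variables of a formula. -/
def vars (F : Finset Clause) : Finset ℕ := F.sup (fun C => C.image Prod.fst)

/-- The set of clauses of `F` containing a variable of `U`. -/
noncomputable def FU (F : Finset Clause) (U : Finset ℕ) : Finset Clause :=
  F.filter (fun C => ∃ l ∈ C, l.1 ∈ U)

/-- Unit variables: variables occurring in unit clauses. -/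
def unitVars (F : Finset Clause) : Finset ℕ :=
  (F.filter (fun C => C.card = 1)).sup (fun C => C.image Prod.fst)

/-- All unit clauses of `F` are positive. -/
def UnitPos (F : Finset Clause) : Prop :=
  ∀ C ∈ F, C.card = 1 → ∃ x, C = {(x, true)}

/-- A hard clause: a positive unit clause, or a two-literal clause `{¬x, y}` / `{¬x, ¬y}`
with `x` a unit variable and `y` not a unit variable. -/
def IsHard (F : Finset Clause) (C : Clause) : Prop :=
  (∃ x, C = {(x, true)}) ∨
  (∃ x ∈ unitVars F, ∃ y ∉ unitVars F, ∃ b : Bool, C = {(x, false), (y, b)})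

/-- The soft (non-hard) clauses of `F`. -/
noncomputable def softF (F : Finset Clause) : Finset Clause :=
  F.filter (fun C => ¬ IsHard F C)

/-- Two-literal hard clauses. -/
noncomputable def F2set (F : Finset Clause) : Finset Clause :=
  F.filter (fun C => ∃ x ∈ unitVars F, ∃ y ∉ unitVars F, ∃ b : Bool, C = {(x, false), (y, b)})

/-- Non-unit variables occurring in two-literal hard clauses. -/
noncomputable def V2set (F : Finset Clause) : Finset ℕ :=
  ((F2set F).sup (fun C => C.image Prod.fst)) \ unitVars F

/-- `F` is a hard formula: every clause is hard. -/
def HardFormula (F : Finset Clause) : Prop := ∀ C ∈ F, IsHard F C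

/-- `F` is expanding: every set `X` of variables is covered by clauses of total weight at least `|X|`. -/
def Expanding (F : Finset Clause) (w : Clause → ℕ) : Prop :=
  ∀ X ⊆ vars F, X.card ≤ wt w (FU F X)

/-- Extend an assignment on the variables of `F` to all of `ℕ`. -/
noncomputable def extAssign (F : Finset Clause) (α : {v // v ∈ vars F} → Bool) : ℕ → Bool :=
  fun n => if h : n ∈ vars F then α ⟨n, h⟩ else false

/-- The probability that the random assignment (unit variables true with probability 2/3,
other variables true with probability 1/2, independently) satisfies the clause `C`. -/
noncomputable def probSat (F : Finset Clause) (C : Clause) : ℝ :=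
  ∑ α : {v // v ∈ vars F} → Bool,
    (∏ v : {v // v ∈ vars F},
      (if (v : ℕ) ∈ unitVars F then (if α v then (2:ℝ)/3 else 1/3) else 1/2)) *
    (if SatC (extAssign F α) C then 1 else 0)

/-!
A set `U` of variables maximizing `|U| - w(F_U)` carries an autarky, by Hall's marriage theorem, and
leaves an expanding formula `F \ F_U`. Satisfying `F_U` by the autarky reduces the claim to
expanding formulas: these must have an assignment falsifying clauses of weight at most
`w(F) / 3 - 2 / 453 * |V(F)|`. One may negate literals so that all unit clauses are positive.

Let `a` be the number of unit variables, `b` the number of non-unit variables in two-literal hard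
clauses, and `S` the weight of the soft clauses. Every other variable occurs only in soft clauses,
so expansion gives `|V(F)| ≤ a + b + S`. Setting unit variables true with probability `2 / 3` and
all others with probability `1 / 2` falsifies a hard clause with probability `1 / 3` and a soft one
with probability at most `8 / 27`, which gains `S / 27` over `w(F) / 3`. On the hard clauses alone
one may instead randomize only one of the two kinds of variables and then choose the others
optimally: each optimal choice incurs the minimum of two integer weights, which lies below a
weighted average of them by a multiple of their distance. Choosing unit variables optimally gains
`1 / 6` for each, choosing the others optimally gains `2 / 9` for each, at a cost of at most
`2 / 3 * S` from the soft clauses. The best of these three assignments gains at least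
`2 / 453 * (a + b + S)`.
-/

/-! ### Independent random assignments -/

section Expectation

variable {α : Type*} [DecidableEq α] {q : α → ℝ} {V : Finset α}

/-- The expectation of a function of a random assignment in which the variables `v ∈ V` are
independently true with probability `q v`, and all other variables are false. -/
noncomputable def expect (q : α → ℝ) (V : Finset α) : ((α → Bool) → ℝ) →ₗ[ℝ] ℝ :=
  ∑ T ∈ V.powerset, ((∏ v ∈ T, q v) * ∏ v ∈ V \ T, (1 - q v)) •
    LinearMap.proj (fun v => decide (v ∈ T))

lemma expect_apply (q : α → ℝ) (V : Finset α) (f : (α → Bool) → ℝ) :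
    expect q V f = ∑ T ∈ V.powerset,
      ((∏ v ∈ T, q v) * ∏ v ∈ V \ T, (1 - q v)) * f (fun v => decide (v ∈ T)) := by
  simp [expect]

lemma update_decide_mem_true (T : Finset α) (v : α) :
    Function.update (fun u => decide (u ∈ T)) v true = fun u => decide (u ∈ insert v T) := by
  ext u
  rcases eq_or_ne u v with rfl | h <;> simp [*]

lemma update_decide_mem_false {T : Finset α} {v : α} (hv : v ∉ T) :
    Function.update (fun u => decide (u ∈ T)) v false = fun u => decide (u ∈ T) := by
  rw [Function.update_eq_self_iff]
  simp [hv]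

lemma expect_insert (q : α → ℝ) {v : α} (hv : v ∉ V) (f : (α → Bool) → ℝ) :
    expect q (insert v V) f = expect q V (fun τ =>
      q v * f (Function.update τ v true) + (1 - q v) * f (Function.update τ v false)) := by
  rw [expect_apply, expect_apply, Finset.sum_powerset_insert hv, ← Finset.sum_add_distrib]
  refine Finset.sum_congr rfl fun T hT => ?_
  have hvT : v ∉ T := fun h => hv (Finset.mem_powerset.1 hT h)
  have hvVT : v ∉ V \ T := fun h => hv (Finset.mem_sdiff.1 h).1
  rw [update_decide_mem_true, update_decide_mem_false hvT, Finset.prod_insert hvT,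
    Finset.insert_sdiff_of_notMem V hvT, Finset.prod_insert hvVT, Finset.insert_sdiff_insert,
    Finset.sdiff_insert_of_notMem hv]
  ring

lemma expect_update (q : α → ℝ) {v : α} (hv : v ∈ V) (f : (α → Bool) → ℝ) :
    expect q V (fun τ =>
      q v * f (Function.update τ v true) + (1 - q v) * f (Function.update τ v false))
      = expect q V f := by
  rw [← Finset.insert_erase hv, expect_insert q (Finset.notMem_erase v V),
    expect_insert q (Finset.notMem_erase v V)]
  congr 1
  ext τ
  simp only [Function.update_idem]
  ring

lemma expect_const (q : α → ℝ) (V : Finset α) (c : ℝ) : expect q V (fun _ => c) = c := by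
  induction V using Finset.induction_on with
  | empty => simp [expect_apply]
  | insert v V hv ih =>
    rw [expect_insert q hv, ← add_mul, add_sub_cancel, one_mul, ih]

lemma exists_le_expect (hq : ∀ v ∈ V, q v ∈ Set.Icc (0 : ℝ) 1) (f : (α → Bool) → ℝ) :
    ∃ τ, f τ ≤ expect q V f := by
  induction V using Finset.induction_on generalizing f with
  | empty => exact ⟨fun _ => false, by simp [expect_apply]⟩
  | insert v V hv ih =>
    have hqv := hq v (Finset.mem_insert_self v V)
    rw [expect_insert q hv]
    obtain ⟨τ, hτ⟩ := ih (fun u hu => hq u (Finset.mem_insert_of_mem hu)) _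
    have hmin := (Convex.min_le_combo (f (Function.update τ v true))
      (f (Function.update τ v false)) hqv.1 (sub_nonneg.2 hqv.2) (by ring)).trans hτ
    rcases min_le_iff.1 hmin with h | h
    · exact ⟨_, h⟩
    · exact ⟨_, h⟩

lemma expect_mono (hq : ∀ v ∈ V, q v ∈ Set.Icc (0 : ℝ) 1) {f g : (α → Bool) → ℝ}
    (h : ∀ τ, f τ ≤ g τ) : expect q V f ≤ expect q V g := by
  obtain ⟨τ, hτ⟩ := exists_le_expect hq (g - f)
  rw [map_sub, Pi.sub_apply] at hτ
  linarith [h τ]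

lemma le_expect_of_le_update (hq : ∀ v ∈ V, q v ∈ Set.Icc (0 : ℝ) 1) {v : α} (hv : v ∈ V)
    {f : (α → Bool) → ℝ} {c : ℝ}
    (h : ∀ τ, c ≤ q v * f (Function.update τ v true) + (1 - q v) * f (Function.update τ v false)) :
    c ≤ expect q V f := by
  rw [← expect_update q hv, ← expect_const q V c]
  exact expect_mono hq h

lemma expect_sum {ι : Type*} (q : α → ℝ) (V : Finset α) (s : Finset ι)
    (f : ι → (α → Bool) → ℝ) :
    expect q V (fun τ => ∑ i ∈ s, f i τ) = ∑ i ∈ s, expect q V (f i) := by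
  rw [← map_sum]
  congr 1
  ext τ
  simp

lemma expect_prod_of_injOn {ι : Type*} (q : α → ℝ) (s : Finset ι) {var : ι → α}
    (hinj : Set.InjOn var s) (hV : ∀ i ∈ s, var i ∈ V) (g : ι → Bool → ℝ) :
    expect q V (fun τ : α → Bool => ∏ i ∈ s, g i (τ (var i)))
      = ∏ i ∈ s, (q (var i) * g i true + (1 - q (var i)) * g i false) := by
  induction s using Finset.induction_on with
  | empty => simp [expect_const]
  | insert i s hi ih =>
    have hne : ∀ j ∈ s, var j ≠ var i := fun j hj h =>
      hi (hinj (by simp [hj]) (by simp) h ▸ hj)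
    have hupd : ∀ (τ : α → Bool) b, ∏ j ∈ insert i s, g j (Function.update τ (var i) b (var j))
        = g i b * ∏ j ∈ s, g j (τ (var j)) := by
      intro τ b
      rw [Finset.prod_insert hi, Function.update_self]
      congr 1
      exact Finset.prod_congr rfl fun j hj => by rw [Function.update_of_ne (hne j hj)]
    rw [← expect_update q (hV i (Finset.mem_insert_self i s)), Finset.prod_insert hi,
      ← ih (hinj.mono (by simp)) fun j hj => hV j (Finset.mem_insert_of_mem hj),
      ← smul_eq_mul, ← map_smul]
    congr 1
    ext τ
    rw [hupd, hupd, Pi.smul_apply, smul_eq_mul]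
    ring

lemma expect_eval (q : α → ℝ) {v : α} (hv : v ∈ V) (g : Bool → ℝ) :
    expect q V (fun τ => g (τ v)) = q v * g true + (1 - q v) * g false := by
  simpa using expect_prod_of_injOn q {()} (var := fun _ => v) (by simp) (fun _ _ => hv)
    (fun _ => g)

lemma expect_sum_eval (q : α → ℝ) (V : Finset α) (g : α → Bool → ℝ) :
    expect q V (fun τ => ∑ v ∈ V, g v (τ v))
      = ∑ v ∈ V, (q v * g v true + (1 - q v) * g v false) := by
  rw [expect_sum]
  exact Finset.sum_congr rfl fun v hv => expect_eval q hv (g v)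

lemma expect_half_sum_eval (V : Finset α) (g : α → Bool → ℝ) :
    expect (fun _ => 1 / 2) V (fun τ => ∑ v ∈ V, g v (τ v)) = 1 / 2 * ∑ v ∈ V, ∑ b, g v b := by
  rw [expect_sum_eval, Finset.mul_sum]
  refine Finset.sum_congr rfl fun v _ => ?_
  rw [Fintype.sum_bool]
  ring

lemma sum_eval_update {M : Type*} [AddCommMonoid M] (g : α → Bool → M) {v : α} (hv : v ∈ V)
    (τ : α → Bool) (b : Bool) :
    ∑ u ∈ V, g u (Function.update τ v b u) = g v b + ∑ u ∈ V.erase v, g u (τ u) := by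
  rw [← Finset.add_sum_erase _ _ hv, Function.update_self]
  congr 1
  exact Finset.sum_congr rfl fun u hu => by
    rw [Function.update_of_ne (Finset.ne_of_mem_erase hu)]

lemma one_le_abs_cast {n : ℤ} (hn : n ≠ 0) : (1 : ℝ) ≤ |(n : ℝ)| := by
  exact_mod_cast Int.one_le_abs hn

-- Flipping `v` moves the integer sum, so its two distances from `m` add up to at least one.
lemma half_le_expect_abs_sum_sub (k : α → Bool → ℤ) (m : ℤ) {v : α} (hv : v ∈ V)
    (hk : k v true ≠ k v false) :
    1 / 2 ≤ expect (fun _ => 1 / 2) V (fun τ => |((∑ u ∈ V, k u (τ u) - m : ℤ) : ℝ)|) := by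
  refine le_expect_of_le_update (fun _ _ => by norm_num) hv fun τ => ?_
  rw [sum_eval_update k hv, sum_eval_update k hv]
  set B := ∑ u ∈ V.erase v, k u (τ u)
  have hdist : (1 : ℝ) ≤ |((k v true + B - m : ℤ) : ℝ) - ((k v false + B - m : ℤ) : ℝ)| := by
    rw [← Int.cast_sub]
    exact one_le_abs_cast (by omega)
  linarith [abs_sub ((k v true + B - m : ℤ) : ℝ) ((k v false + B - m : ℤ) : ℝ)]

-- The right-hand side averages `|A j + B k + T|` over independent `A`, `B` that are one with
-- probability `2 / 3` and zero otherwise. If `j + k + T = 0`, then `j + T` and `k + T` are nonzero.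
lemma four_ninths_le_abs_of_ne_zero {j k : ℤ} (hj : j ≠ 0) (hk : k ≠ 0) (T : ℤ) :
    4 / 9 ≤ 2 / 3 * (2 / 3 * |((j + (k + T) : ℤ) : ℝ)| + 1 / 3 * |((j + T : ℤ) : ℝ)|)
      + 1 / 3 * (2 / 3 * |((k + T : ℤ) : ℝ)| + 1 / 3 * |(T : ℝ)|) := by
  have h₁ := abs_nonneg ((j + T : ℤ) : ℝ)
  have h₂ := abs_nonneg ((k + T : ℤ) : ℝ)
  have h₃ := abs_nonneg (T : ℝ)
  by_cases h : j + (k + T) = 0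
  · have hjT := one_le_abs_cast (n := j + T) (by omega)
    have hkT := one_le_abs_cast (n := k + T) (by omega)
    rw [h, Int.cast_zero, abs_zero]
    linarith
  · linarith [one_le_abs_cast h]

lemma four_ninths_le_expect_abs_sum (k : α → ℤ) {v : α} (hv : v ∈ V) (hk : k v ≠ 0) :
    4 / 9 ≤ expect (fun _ => 2 / 3) V
      (fun τ => |((∑ u ∈ V, if τ u then k u else 0 : ℤ) : ℝ)|) := by
  have hq : ∀ u ∈ V, (2 / 3 : ℝ) ∈ Set.Icc (0 : ℝ) 1 := fun _ _ => by norm_num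
  have hupd {S : Finset α} {u : α} (hu : u ∈ S) :=
    sum_eval_update (fun u b => if b then k u else 0) hu
  by_cases hother : ∃ u ∈ V.erase v, k u ≠ 0
  · obtain ⟨u, hu, hku⟩ := hother
    rw [← expect_update _ hv]
    refine le_expect_of_le_update hq (Finset.mem_of_mem_erase hu) fun τ => ?_
    simp only [hupd hv, hupd hu, if_true, Bool.false_eq_true, if_false, zero_add]
    have := four_ninths_le_abs_of_ne_zero hk hku
      (∑ z ∈ (V.erase v).erase u, if τ z then k z else 0)
    linarith
  · push Not at hother
    refine le_expect_of_le_update hq hv fun τ => ?_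
    have hzero : ∑ u ∈ V.erase v, (if τ u then k u else 0) = 0 :=
      Finset.sum_eq_zero fun u hu => by simp [hother u hu]
    simp only [hupd hv, hzero, if_true, Bool.false_eq_true, if_false, add_zero]
    rw [Int.cast_zero, abs_zero]
    linarith [one_le_abs_cast hk]

end Expectation

/-! ### Formulas consisting of hard clauses -/

section HardFormula

variable {ι κ : Type*}

/-- The total weight of the formula with unit clauses `{x}` of weight `u x` and clauses `{¬x, y}`,
`{¬x, ¬y}` of weights `h x y false`, `h x y true`, for `x ∈ X` and `y ∈ Y`: the Boolean is the
value of `y` that the clause excludes when `x` is true. -/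
def hardWt (X : Finset ι) (Y : Finset κ) (u : ι → ℕ) (h : ι → κ → Bool → ℕ) : ℕ :=
  ∑ x ∈ X, (u x + ∑ y ∈ Y, ∑ b, h x y b)

/-- The weight of the clauses of the formula described at `hardWt` that are falsified when the
variables of `X` are set by `σ` and those of `Y` by `ρ`. -/
def hardUnsatWt (X : Finset ι) (Y : Finset κ) (u : ι → ℕ) (h : ι → κ → Bool → ℕ)
    (σ : ι → Bool) (ρ : κ → Bool) : ℕ :=
  ∑ x ∈ X, if σ x then ∑ y ∈ Y, h x y (ρ y) else u x

lemma hardUnsatWt_eq_sum_add_sum (X : Finset ι) (Y : Finset κ) (u : ι → ℕ)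
    (h : ι → κ → Bool → ℕ) (σ : ι → Bool) (ρ : κ → Bool) :
    hardUnsatWt X Y u h σ ρ = (∑ x ∈ X, if σ x then 0 else u x)
      + ∑ y ∈ Y, ∑ x ∈ X, if σ x then h x y (ρ y) else 0 := by
  rw [hardUnsatWt, Finset.sum_comm, ← Finset.sum_add_distrib]
  refine Finset.sum_congr rfl fun x _ => ?_
  split_ifs <;> simp

-- With these coefficients a constant `s` and a random `t` of mean `W / 2` give `(s + W) / 3` on
-- average, up to the deviation.
lemma min_le_weighted_sub_abs_sub (s t : ℝ) :
    min s t ≤ 1 / 3 * s + 2 / 3 * t - 1 / 3 * |t - s| := by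
  rcases le_total s t with h | h
  · rw [min_eq_left h, abs_of_nonneg (by linarith)]; linarith
  · rw [min_eq_right h, abs_of_nonpos (by linarith)]; linarith

lemma expect_min_const_sum_le [DecidableEq κ] {Y : Finset κ} {k : κ → Bool → ℕ} {m : ℕ} (hm : 0 < m)
    (hk : ∀ y ∈ Y, k y true = 0 ∨ k y false = 0) :
    expect (fun _ => 1 / 2) Y (fun ρ => ((min m (∑ y ∈ Y, k y (ρ y)) : ℕ) : ℝ)) + 1 / 6
      ≤ ((m + ∑ y ∈ Y, ∑ b, k y b : ℕ) : ℝ) / 3 := by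
  have hm' : (1 : ℝ) ≤ m := by exact_mod_cast hm
  by_cases hY : ∃ y ∈ Y, k y true ≠ k y false
  · obtain ⟨y, hy, hne⟩ := hY
    set A : (κ → Bool) → ℝ := fun ρ => ∑ y ∈ Y, (k y (ρ y) : ℝ)
    set D : (κ → Bool) → ℝ := fun ρ => |((∑ y ∈ Y, (k y (ρ y) : ℤ) - m : ℤ) : ℝ)| with hD
    have hmean : expect (fun _ => 1 / 2) Y A = 1 / 2 * ∑ y ∈ Y, ∑ b, (k y b : ℝ) :=
      expect_half_sum_eval Y fun y b => (k y b : ℝ)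
    have hdev : 1 / 2 ≤ expect (fun _ => 1 / 2) Y D :=
      half_le_expect_abs_sum_sub (fun y b => (k y b : ℤ)) m hy (by exact_mod_cast hne)
    have hmin : expect (fun _ => 1 / 2) Y (fun ρ => ((min m (∑ y ∈ Y, k y (ρ y)) : ℕ) : ℝ)) ≤
        expect (fun _ => 1 / 2) Y
          ((1 / 3 : ℝ) • (fun _ => (m : ℝ)) + (2 / 3 : ℝ) • A - (1 / 3 : ℝ) • D) := by
      refine expect_mono (fun _ _ => by norm_num) fun ρ => ?_
      simp only [hD, Int.cast_sub, Int.cast_sum, Int.cast_natCast, Nat.cast_min, Nat.cast_sum]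
      exact min_le_weighted_sub_abs_sub _ _
    simp only [map_sub, map_add, map_smul, expect_const, hmean, smul_eq_mul] at hmin
    simp only [Nat.cast_add, Nat.cast_sum]
    linarith
  · have hzero : ∀ y ∈ Y, ∀ b, k y b = 0 := by
      push Not at hY
      intro y hy b
      have := hY y hy
      have := hk y hy
      cases b <;> omega
    have hmin : (fun ρ : κ → Bool => ((min m (∑ y ∈ Y, k y (ρ y)) : ℕ) : ℝ)) = fun _ => 0 := by
      ext ρ
      rw [Finset.sum_eq_zero fun y hy => hzero y hy (ρ y), Nat.min_zero, Nat.cast_zero]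
    rw [hmin, expect_const, Finset.sum_eq_zero fun y hy => Finset.sum_eq_zero fun b _ =>
      hzero y hy b, add_zero]
    linarith

lemma exists_hardUnsatWt_add_card_left_le (X : Finset ι) (Y : Finset κ) {u : ι → ℕ}
    {h : ι → κ → Bool → ℕ} (hu : ∀ x ∈ X, 0 < u x)
    (hh : ∀ x ∈ X, ∀ y ∈ Y, h x y true = 0 ∨ h x y false = 0) :
    ∃ σ ρ, (hardUnsatWt X Y u h σ ρ : ℝ) + (X.card : ℝ) / 6 ≤ (hardWt X Y u h : ℝ) / 3 := by
  obtain ⟨ρ, hρ⟩ := exists_le_expect (q := fun _ => 1 / 2) (V := Y) (fun _ _ => by norm_num)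
    (fun ρ => ∑ x ∈ X, ((min (u x) (∑ y ∈ Y, h x y (ρ y)) : ℕ) : ℝ))
  refine ⟨fun x => decide (∑ y ∈ Y, h x y (ρ y) ≤ u x), ρ, ?_⟩
  have hopt : hardUnsatWt X Y u h (fun x => decide (∑ y ∈ Y, h x y (ρ y) ≤ u x)) ρ
      = ∑ x ∈ X, min (u x) (∑ y ∈ Y, h x y (ρ y)) := by
    simp only [hardUnsatWt, decide_eq_true_eq, min_comm (u _), min_def]
  have hgain := Finset.sum_le_sum fun x hx => expect_min_const_sum_le (hu x hx) (hh x hx)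
  rw [Finset.sum_add_distrib, Finset.sum_const, nsmul_eq_mul, ← Finset.sum_div,
    ← Nat.cast_sum] at hgain
  rw [expect_sum, ← Nat.cast_sum, ← hopt] at hρ
  rw [hardWt]
  linarith

lemma expect_min_sum_sum_le [DecidableEq ι] {X : Finset ι} {k : ι → Bool → ℕ}
    (hk : ∃ x ∈ X, k x true ≠ k x false) :
    expect (fun _ => 2 / 3) X (fun σ =>
        ((min (∑ x ∈ X, if σ x then k x true else 0) (∑ x ∈ X, if σ x then k x false else 0) : ℕ)
          : ℝ)) + 2 / 9
      ≤ ((∑ x ∈ X, ∑ b, k x b : ℕ) : ℝ) / 3 := by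
  obtain ⟨x, hx, hne⟩ := hk
  set D : Bool → (ι → Bool) → ℝ := fun b σ => ∑ x ∈ X, if σ x then (k x b : ℝ) else 0 with hD
  have hmean : ∀ b, expect (fun _ => 2 / 3) X (D b) = 2 / 3 * ∑ x ∈ X, (k x b : ℝ) := by
    intro b
    rw [expect_sum_eval _ _ fun x c => if c then (k x b : ℝ) else 0, Finset.mul_sum]
    exact Finset.sum_congr rfl fun x _ => by simp
  have hmin : (fun σ : ι → Bool => ((min (∑ x ∈ X, if σ x then k x true else 0)
        (∑ x ∈ X, if σ x then k x false else 0) : ℕ) : ℝ))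
      = (1 / 2 : ℝ) • (D true + D false - fun σ => |D true σ - D false σ|) := by
    ext σ
    simp only [hD, Pi.add_apply, Pi.sub_apply, Pi.smul_apply, smul_eq_mul]
    push_cast
    rw [inf_eq_half_smul_add_sub_abs_sub' ℝ, abs_sub_comm, smul_eq_mul, one_div]
  have hdiff : ∀ σ : ι → Bool, D true σ - D false σ
      = ((∑ x ∈ X, if σ x then (k x true : ℤ) - k x false else 0 : ℤ) : ℝ) := by
    intro σ
    simp only [hD, ← Finset.sum_sub_distrib]
    push_cast
    exact Finset.sum_congr rfl fun x _ => by split_ifs <;> simp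
  have hdev := four_ninths_le_expect_abs_sum (fun x => (k x true : ℤ) - k x false) hx
    (sub_ne_zero.2 (by exact_mod_cast hne))
  simp only [← hdiff] at hdev
  rw [hmin, map_smul, map_sub, map_add, hmean, hmean, smul_eq_mul]
  simp only [Fintype.sum_bool, Nat.cast_sum, Nat.cast_add, Finset.sum_add_distrib]
  linarith

lemma exists_hardUnsatWt_add_card_right_le (X : Finset ι) (Y : Finset κ) (u : ι → ℕ)
    {h : ι → κ → Bool → ℕ} (hh : ∀ y ∈ Y, ∃ x ∈ X, h x y true ≠ h x y false) :
    ∃ σ ρ, (hardUnsatWt X Y u h σ ρ : ℝ) + 2 / 9 * (Y.card : ℝ) ≤ (hardWt X Y u h : ℝ) / 3 := by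
  set D : κ → Bool → (ι → Bool) → ℕ := fun y b σ => ∑ x ∈ X, if σ x then h x y b else 0
  obtain ⟨σ, hσ⟩ := exists_le_expect (q := fun _ => 2 / 3) (V := X) (fun _ _ => by norm_num)
    ((fun σ => ∑ x ∈ X, ((if σ x then 0 else u x : ℕ) : ℝ))
      + fun σ => ∑ y ∈ Y, ((min (D y true σ) (D y false σ) : ℕ) : ℝ))
  refine ⟨σ, fun y => decide (D y true σ ≤ D y false σ), ?_⟩
  have hopt : hardUnsatWt X Y u h σ (fun y => decide (D y true σ ≤ D y false σ))
      = (∑ x ∈ X, if σ x then 0 else u x) + ∑ y ∈ Y, min (D y true σ) (D y false σ) := by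
    rw [hardUnsatWt_eq_sum_add_sum]
    congr 1
    refine Finset.sum_congr rfl fun y _ => ?_
    change D y (decide (D y true σ ≤ D y false σ)) σ = _
    rw [min_def]
    split_ifs with hle <;> simp [hle]
  have hunit : expect (fun _ => 2 / 3) X (fun σ => ∑ x ∈ X, ((if σ x then 0 else u x : ℕ) : ℝ))
      = 1 / 3 * ∑ x ∈ X, (u x : ℝ) := by
    rw [expect_sum_eval _ _ fun x c => ((if c then 0 else u x : ℕ) : ℝ), Finset.mul_sum]
    exact Finset.sum_congr rfl fun x _ => by norm_num
  have hgain := Finset.sum_le_sum fun y hy => expect_min_sum_sum_le (hh y hy)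
  rw [Finset.sum_add_distrib, Finset.sum_const, nsmul_eq_mul, ← Finset.sum_div, ← expect_sum,
    ← Nat.cast_sum, Finset.sum_comm] at hgain
  rw [map_add, hunit, Pi.add_apply, ← Nat.cast_sum, ← Nat.cast_sum, ← Nat.cast_add, ← hopt] at hσ
  rw [hardWt, Finset.sum_add_distrib, Nat.cast_add, Nat.cast_sum X u]
  linarith

end HardFormula


/-! ### Expanding formulas with positive unit clauses -/

section Formula

variable {F G : Finset Clause} {w : Clause → ℕ}

/-- Total weight of the clauses of `G` falsified by `τ`. -/
noncomputable def unsatWt (w : Clause → ℕ) (τ : ℕ → Bool) (G : Finset Clause) : ℕ :=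
  ∑ C ∈ G, if SatC τ C then 0 else w C

lemma satWt_add_unsatWt (w : Clause → ℕ) (τ : ℕ → Bool) (G : Finset Clause) :
    satWt w τ G + unsatWt w τ G = wt w G := by
  rw [satWt, unsatWt, wt, Finset.sum_filter, ← Finset.sum_add_distrib]
  exact Finset.sum_congr rfl fun C _ => by split_ifs <;> simp

lemma satC_singleton {τ : ℕ → Bool} {x : ℕ} {b : Bool} : SatC τ {(x, b)} ↔ τ x = b := by
  simp [SatC]

lemma satC_pair {τ : ℕ → Bool} {l m : ℕ × Bool} :
    SatC τ {l, m} ↔ τ l.1 = l.2 ∨ τ m.1 = m.2 := by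
  simp [SatC]

lemma mem_vars {v : ℕ} : v ∈ vars F ↔ ∃ C ∈ F, ∃ l ∈ C, l.1 = v := by
  simp [vars, Finset.mem_sup]

lemma vars_mono (h : G ⊆ F) : vars G ⊆ vars F :=
  Finset.sup_mono h

lemma fst_mem_vars {C : Clause} (hC : C ∈ F) {l : ℕ × Bool} (hl : l ∈ C) : l.1 ∈ vars F :=
  mem_vars.2 ⟨C, hC, l, hl, rfl⟩

lemma UnitPos.mem_unitVars (hpos : UnitPos F) {x : ℕ} :
    x ∈ unitVars F ↔ ({(x, true)} : Clause) ∈ F := by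
  simp only [unitVars, Finset.mem_sup, Finset.mem_filter, Finset.mem_image]
  constructor
  · rintro ⟨C, ⟨hC, hcard⟩, l, hl, rfl⟩
    obtain ⟨x, rfl⟩ := hpos C hC hcard
    rwa [Finset.mem_singleton.1 hl]
  · exact fun hx => ⟨_, ⟨hx, Finset.card_singleton _⟩, _, Finset.mem_singleton_self _, rfl⟩

/-- The clause `{¬x, y ≠ b}`; with `x` a unit variable and `y` not, these are the two-literal hard
clauses. -/
def pairClause (x y : ℕ) (b : Bool) : Clause := {(x, false), (y, !b)}

/-- The weight of `pairClause x y b` in `F`, zero if it does not occur. -/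
noncomputable def pairWt (F : Finset Clause) (w : Clause → ℕ) (x y : ℕ) (b : Bool) : ℕ :=
  if pairClause x y b ∈ F then w (pairClause x y b) else 0

lemma satC_pairClause {τ : ℕ → Bool} {x y : ℕ} {b : Bool} :
    SatC τ (pairClause x y b) ↔ (τ x = true → τ y ≠ b) := by
  rw [pairClause, satC_pair, ← Bool.not_eq_true, ← imp_iff_not_or, ← Bool.eq_not_iff]

lemma pairClause_injOn (U : Set ℕ) :
    Set.InjOn (fun i : ℕ × ℕ × Bool => pairClause i.1 i.2.1 i.2.2) {i | i.1 ∈ U ∧ i.2.1 ∉ U} := by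
  rintro ⟨x, y, b⟩ ⟨hx, hy⟩ ⟨x', y', b'⟩ ⟨hx', hy'⟩ heq
  simp only at heq
  have hl : (x, false) ∈ pairClause x' y' b' := heq ▸ by simp [pairClause]
  have hm : (y, !b) ∈ pairClause x' y' b' := heq ▸ by simp [pairClause]
  simp only [pairClause, Finset.mem_insert, Finset.mem_singleton, Prod.mk.injEq] at hl hm
  grind

lemma mem_F2set {C : Clause} :
    C ∈ F2set F ↔ C ∈ F ∧ ∃ x ∈ unitVars F, ∃ y ∉ unitVars F, ∃ b, C = pairClause x y b := by
  simp only [F2set, Finset.mem_filter, pairClause, Bool.exists_bool, Bool.not_true, Bool.not_false,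
    or_comm]

lemma mem_V2set {y : ℕ} :
    y ∈ V2set F ↔ y ∉ unitVars F ∧ ∃ x ∈ unitVars F, ∃ b, pairClause x y b ∈ F := by
  simp only [V2set, Finset.mem_sdiff, Finset.mem_sup, Finset.mem_image, mem_F2set]
  constructor
  · rintro ⟨⟨C, ⟨hC, x, hx, z, -, b, rfl⟩, l, hl, rfl⟩, hy⟩
    refine ⟨hy, x, hx, b, ?_⟩
    rw [pairClause, Finset.mem_insert, Finset.mem_singleton] at hl
    rcases hl with rfl | rfl
    · exact absurd hx hy
    · exact hC
  · rintro ⟨hy, x, hx, b, hC⟩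
    exact ⟨⟨_, ⟨hC, x, hx, y, hy, b, rfl⟩, (y, !b), by simp [pairClause], rfl⟩, hy⟩

lemma UnitPos.filter_isHard_eq (hpos : UnitPos F) :
    F.filter (IsHard F) = (unitVars F).image (fun x => {(x, true)}) ∪ F2set F := by
  ext C
  simp only [IsHard, F2set, Finset.mem_filter, Finset.mem_union, Finset.mem_image,
    hpos.mem_unitVars]
  grind

lemma disjoint_image_singleton_F2set (U : Finset ℕ) :
    Disjoint (U.image (fun x => ({(x, true)} : Clause))) (F2set F) := by
  rw [Finset.disjoint_left]
  intro C hC hC'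
  obtain ⟨x, -, rfl⟩ := Finset.mem_image.1 hC
  obtain ⟨-, x', -, y, -, b, heq⟩ := mem_F2set.1 hC'
  have hmem : (x', false) ∈ ({(x, true)} : Clause) := heq ▸ by simp [pairClause]
  simp at hmem

lemma sum_F2set {M : Type*} [AddCommMonoid M] (f : Clause → M) :
    ∑ C ∈ F2set F, f C = ∑ x ∈ unitVars F, ∑ y ∈ V2set F, ∑ b,
      if pairClause x y b ∈ F then f (pairClause x y b) else 0 := by
  have himage : F2set F
      = Finset.image (fun i => pairClause i.1 i.2.1 i.2.2)
          {i ∈ unitVars F ×ˢ V2set F ×ˢ Finset.univ | pairClause i.1 i.2.1 i.2.2 ∈ F} := by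
    ext C
    simp only [mem_F2set, Finset.mem_image, Finset.mem_filter, Finset.mem_product, Finset.mem_univ,
      mem_V2set, Prod.exists]
    grind
  rw [himage, Finset.sum_image, Finset.sum_filter, Finset.sum_product]
  · simp only [Finset.sum_product]
  · refine (pairClause_injOn (unitVars F : Set ℕ)).mono fun i hi => ?_
    obtain ⟨hx, hy, -⟩ : _ ∧ _ ∧ _ := by
      simpa only [Finset.coe_filter, Finset.mem_product, Set.mem_ofPred_eq, and_assoc] using hi
    exact ⟨hx, (mem_V2set.1 hy).1⟩

lemma UnitPos.sum_eq (hpos : UnitPos F) {M : Type*} [AddCommMonoid M] (f : Clause → M) :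
    ∑ C ∈ F, f C = ∑ x ∈ unitVars F, (f {(x, true)} + ∑ y ∈ V2set F, ∑ b,
      if pairClause x y b ∈ F then f (pairClause x y b) else 0) + ∑ C ∈ softF F, f C := by
  rw [← Finset.sum_filter_add_sum_filter_not F (IsHard F), hpos.filter_isHard_eq,
    Finset.sum_union (disjoint_image_singleton_F2set _), Finset.sum_image (by simp), sum_F2set,
    Finset.sum_add_distrib, softF]

lemma UnitPos.wt_eq (hpos : UnitPos F) (w : Clause → ℕ) :
    wt w F = hardWt (unitVars F) (V2set F) (fun x => w {(x, true)}) (pairWt F w)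
      + wt w (softF F) :=
  hpos.sum_eq w

lemma UnitPos.unsatWt_piecewise_le (hpos : UnitPos F) (w : Clause → ℕ) (σ ρ : ℕ → Bool) :
    unsatWt w ((unitVars F).piecewise σ ρ) F
      ≤ hardUnsatWt (unitVars F) (V2set F) (fun x => w {(x, true)}) (pairWt F w) σ ρ
        + wt w (softF F) := by
  rw [unsatWt, hpos.sum_eq]
  refine add_le_add (Finset.sum_congr rfl fun x hx => ?_).le
    (Finset.sum_le_sum fun C _ => by split_ifs <;> simp)
  have hσ := Finset.piecewise_eq_of_mem _ σ ρ hx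
  have hρ : ∀ y ∈ V2set F, (unitVars F).piecewise σ ρ y = ρ y := fun y hy =>
    Finset.piecewise_eq_of_notMem _ σ ρ (mem_V2set.1 hy).1
  have hpair : ∀ y ∈ V2set F, (∑ b, if pairClause x y b ∈ F then
        if SatC ((unitVars F).piecewise σ ρ) (pairClause x y b) then 0 else w (pairClause x y b)
      else 0) = if σ x then pairWt F w x y (ρ y) else 0 := by
    intro y hy
    simp only [satC_pairClause, hσ, hρ y hy, pairWt, Fintype.sum_bool]
    cases σ x <;> cases ρ y <;> simp
  rw [Finset.sum_congr rfl hpair, satC_singleton, hσ]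
  cases σ x <;> simp

lemma Sat3.pairWt_eq_zero_or (h3 : Sat3 F) (hpos : UnitPos F) (w : Clause → ℕ) {x : ℕ}
    (hx : x ∈ unitVars F) (y : ℕ) : pairWt F w x y true = 0 ∨ pairWt F w x y false = 0 := by
  by_contra! hne
  simp only [pairWt, ne_eq, ite_eq_right_iff, Classical.not_imp] at hne
  obtain ⟨τ, hτx, ht, hf⟩ := h3 _ (hpos.mem_unitVars.1 hx) _ hne.1.1 _ hne.2.1
  rw [satC_singleton] at hτx
  rw [satC_pairClause] at ht hf
  cases h : τ y <;> simp_all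

lemma exists_pairWt_ne_zero (hw : ∀ C ∈ F, 0 < w C) {y : ℕ} (hy : y ∈ V2set F) :
    ∃ x ∈ unitVars F, ∃ b, pairWt F w x y b ≠ 0 := by
  obtain ⟨-, x, hx, b, hC⟩ := mem_V2set.1 hy
  exact ⟨x, hx, b, by rw [pairWt, if_pos hC]; exact (hw _ hC).ne'⟩

lemma exists_unsatWt_add_card_unitVars_le (hpos : UnitPos F) (h3 : Sat3 F)
    (hw : ∀ C ∈ F, 0 < w C) :
    ∃ τ, (unsatWt w τ F : ℝ) + ((unitVars F).card : ℝ) / 6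
      ≤ (wt w F : ℝ) / 3 + 2 / 3 * (wt w (softF F) : ℝ) := by
  obtain ⟨σ, ρ, hσρ⟩ := exists_hardUnsatWt_add_card_left_le (unitVars F) (V2set F)
    (fun x hx => hw _ (hpos.mem_unitVars.1 hx)) (fun x hx y _ => h3.pairWt_eq_zero_or hpos w hx y)
  refine ⟨(unitVars F).piecewise σ ρ, ?_⟩
  have hle : (unsatWt w _ F : ℝ) ≤ _ := Nat.cast_le.2 (hpos.unsatWt_piecewise_le w σ ρ)
  rw [hpos.wt_eq w]
  push_cast at hle ⊢
  linarith

lemma exists_unsatWt_add_card_V2set_le (hpos : UnitPos F) (h3 : Sat3 F) (hw : ∀ C ∈ F, 0 < w C) :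
    ∃ τ, (unsatWt w τ F : ℝ) + 2 / 9 * ((V2set F).card : ℝ)
      ≤ (wt w F : ℝ) / 3 + 2 / 3 * (wt w (softF F) : ℝ) := by
  have hne : ∀ y ∈ V2set F, ∃ x ∈ unitVars F, pairWt F w x y true ≠ pairWt F w x y false := by
    intro y hy
    obtain ⟨x, hx, b, hb⟩ := exists_pairWt_ne_zero hw hy
    refine ⟨x, hx, ?_⟩
    have := h3.pairWt_eq_zero_or hpos w hx y
    cases b <;> omega
  obtain ⟨σ, ρ, hσρ⟩ := exists_hardUnsatWt_add_card_right_le (unitVars F) (V2set F)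
    (fun x => w {(x, true)}) hne
  refine ⟨(unitVars F).piecewise σ ρ, ?_⟩
  have hle : (unsatWt w _ F : ℝ) ≤ _ := Nat.cast_le.2 (hpos.unsatWt_piecewise_le w σ ρ)
  rw [hpos.wt_eq w]
  push_cast at hle ⊢
  linarith

/-- The probability that the literal `l` is false when each variable `v` is true with probability
`q v`. -/
def falseProb (q : ℕ → ℝ) (l : ℕ × Bool) : ℝ := if l.2 then 1 - q l.1 else q l.1

lemma expect_not_satC (q : ℕ → ℝ) {V : Finset ℕ} {C : Clause} (hV : ∀ l ∈ C, l.1 ∈ V)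
    (hC : ∀ v : ℕ, ¬((v, true) ∈ C ∧ (v, false) ∈ C)) :
    expect q V (fun τ => if SatC τ C then 0 else 1) = ∏ l ∈ C, falseProb q l := by
  have hinj : Set.InjOn Prod.fst (C : Set (ℕ × Bool)) := by
    rintro ⟨v, b⟩ hb ⟨_, c⟩ hc rfl
    have := hC v
    cases b <;> cases c <;> simp_all
  have hprod : (fun τ => if SatC τ C then (0 : ℝ) else 1)
      = fun τ => ∏ l ∈ C, if τ l.1 = l.2 then 0 else 1 := by
    ext τ
    by_cases h : SatC τ C
    · obtain ⟨l, hl, hτ⟩ := h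
      rw [if_pos ⟨l, hl, hτ⟩]
      exact Eq.symm (Finset.prod_eq_zero hl (by rw [if_pos hτ]))
    · rw [if_neg h, Finset.prod_eq_one fun l hl => if_neg fun hτ => h ⟨l, hl, hτ⟩]
  rw [hprod, expect_prod_of_injOn q C hinj hV fun l b => if b = l.2 then 0 else 1]
  refine Finset.prod_congr rfl fun l _ => ?_
  cases h : l.2 <;> simp [falseProb, h]

/-- The probability of being true in a random assignment that favours the unit variables, whose
positive unit clauses it satisfies with probability `2/3`. -/
noncomputable def unitBias (F : Finset Clause) (x : ℕ) : ℝ :=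
  if x ∈ unitVars F then 2 / 3 else 1 / 2

lemma unitBias_mem_Icc (F : Finset Clause) (x : ℕ) : unitBias F x ∈ Set.Icc (0 : ℝ) 1 := by
  rw [unitBias]
  split_ifs <;> norm_num

lemma falseProb_unitBias (F : Finset Clause) (l : ℕ × Bool) :
    falseProb (unitBias F) l
      = if l.1 ∈ unitVars F then (if l.2 then 1 / 3 else 2 / 3) else 1 / 2 := by
  simp only [falseProb, unitBias]
  split_ifs <;> norm_num

lemma falseProb_unitBias_mem_Icc (F : Finset Clause) (l : ℕ × Bool) :
    falseProb (unitBias F) l ∈ Set.Icc (0 : ℝ) (2 / 3) := by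
  rw [falseProb_unitBias]
  split_ifs <;> norm_num

lemma Sat3.pos_unit_of_soft_pair (h3 : Sat3 F) (hpos : UnitPos F) {l m : ℕ × Bool}
    (hC : {l, m} ∈ softF F) (hl : l.1 ∈ unitVars F) (hneg : l.2 = false) :
    m.1 ∈ unitVars F ∧ m.2 = true := by
  obtain ⟨x, _⟩ := l
  obtain ⟨z, b⟩ := m
  obtain rfl := hneg
  obtain ⟨hCF, hsoft⟩ := Finset.mem_filter.1 hC
  have hz : z ∈ unitVars F := by
    by_contra hz
    exact hsoft (Or.inr ⟨x, hl, z, hz, b, rfl⟩)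
  refine ⟨hz, ?_⟩
  obtain ⟨τ, hτx, hτz, hτ⟩ :=
    h3 _ (hpos.mem_unitVars.1 hl) _ (hpos.mem_unitVars.1 hz) _ hCF
  rw [satC_singleton] at hτx hτz
  simpa [satC_pair, hτx, hτz] using hτ

lemma Sat3.prod_falseProb_pair_le (h3 : Sat3 F) (hpos : UnitPos F) {l m : ℕ × Bool} (hne : l ≠ m)
    (hC : {l, m} ∈ softF F) : ∏ k ∈ {l, m}, falseProb (unitBias F) k ≤ 8 / 27 := by
  have hl := h3.pos_unit_of_soft_pair hpos hC
  have hm := h3.pos_unit_of_soft_pair hpos (Finset.pair_comm l m ▸ hC)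
  rw [Finset.prod_pair hne, falseProb_unitBias, falseProb_unitBias]
  split_ifs <;> first | (exfalso; simp_all; done) | norm_num

lemma prod_falseProb_le_of_three_le_card (F : Finset Clause) {C : Clause} (hC : 3 ≤ C.card) :
    ∏ l ∈ C, falseProb (unitBias F) l ≤ 8 / 27 :=
  calc ∏ l ∈ C, falseProb (unitBias F) l
      ≤ ∏ _l ∈ C, (2 / 3 : ℝ) := Finset.prod_le_prod
        (fun l _ => (falseProb_unitBias_mem_Icc F l).1)
        (fun l _ => (falseProb_unitBias_mem_Icc F l).2)
    _ = (2 / 3 : ℝ) ^ C.card := Finset.prod_const _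
    _ ≤ (2 / 3 : ℝ) ^ 3 := pow_le_pow_of_le_one (by norm_num) (by norm_num) hC
    _ = 8 / 27 := by norm_num

lemma prod_falseProb_le_of_soft (hF : IsCNF F) (hpos : UnitPos F) (h3 : Sat3 F) {C : Clause}
    (hC : C ∈ softF F) : ∏ l ∈ C, falseProb (unitBias F) l ≤ 8 / 27 := by
  obtain ⟨hCF, hsoft⟩ := Finset.mem_filter.1 hC
  have hcard : 0 < C.card := Finset.card_pos.2 (hF C hCF).1
  obtain h | h | h : C.card = 1 ∨ C.card = 2 ∨ 3 ≤ C.card := by omega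
  · exact absurd (Or.inl (hpos C hCF h)) hsoft
  · obtain ⟨l, m, hne, rfl⟩ := Finset.card_eq_two.1 h
    exact h3.prod_falseProb_pair_le hpos hne hC
  · exact prod_falseProb_le_of_three_le_card F h

lemma UnitPos.prod_falseProb_eq_of_isHard (hpos : UnitPos F) {C : Clause} (hC : C ∈ F)
    (hhard : IsHard F C) : ∏ l ∈ C, falseProb (unitBias F) l = 1 / 3 := by
  rcases hhard with ⟨x, rfl⟩ | ⟨x, hx, y, hy, b, rfl⟩
  · rw [Finset.prod_singleton, falseProb_unitBias, if_pos (hpos.mem_unitVars.2 hC), if_pos rfl]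
  · have hne : (x, false) ≠ (y, b) := fun h => hy ((Prod.mk.inj h).1 ▸ hx)
    rw [Finset.prod_pair hne, falseProb_unitBias, falseProb_unitBias]
    norm_num [hx, hy]

lemma exists_unsatWt_add_soft_le (w : Clause → ℕ) (hF : IsCNF F) (hpos : UnitPos F)
    (h3 : Sat3 F) :
    ∃ τ, (unsatWt w τ F : ℝ) + (wt w (softF F) : ℝ) / 27 ≤ (wt w F : ℝ) / 3 := by
  obtain ⟨τ, hτ⟩ := exists_le_expect (fun x (_ : x ∈ vars F) => unitBias_mem_Icc F x)
    (fun τ => ∑ C ∈ F, (w C : ℝ) * if SatC τ C then 0 else 1)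
  refine ⟨τ, ?_⟩
  have hunsat : (unsatWt w τ F : ℝ) = ∑ C ∈ F, (w C : ℝ) * if SatC τ C then 0 else 1 := by
    simp [unsatWt]
  have hexpect : ∀ C ∈ F, expect (unitBias F) (vars F)
        (fun τ => (w C : ℝ) * if SatC τ C then 0 else 1)
      = w C * ∏ l ∈ C, falseProb (unitBias F) l := by
    intro C hC
    rw [← expect_not_satC (unitBias F) (fun l hl => fst_mem_vars hC hl) (hF C hC).2,
      ← smul_eq_mul, ← map_smul]
    rfl
  have hclause : ∀ C ∈ F, (w C : ℝ) * ∏ l ∈ C, falseProb (unitBias F) l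
      + (if ¬IsHard F C then (w C : ℝ) else 0) / 27 ≤ w C / 3 := by
    intro C hC
    by_cases hhard : IsHard F C
    · rw [hpos.prod_falseProb_eq_of_isHard hC hhard, if_neg (not_not.2 hhard)]
      linarith
    · have := mul_le_mul_of_nonneg_left
        (prod_falseProb_le_of_soft hF hpos h3 (Finset.mem_filter.2 ⟨hC, hhard⟩))
        (Nat.cast_nonneg (α := ℝ) (w C))
      rw [if_pos hhard]
      linarith
  have hsum := Finset.sum_le_sum hclause
  rw [Finset.sum_add_distrib, ← Finset.sum_div, ← Finset.sum_div, ← Finset.sum_filter] at hsum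
  rw [expect_sum, Finset.sum_congr rfl hexpect, ← hunsat] at hτ
  simp only [wt, Nat.cast_sum, softF]
  linarith

lemma Expanding.card_vars_le (hexp : Expanding F w) (hpos : UnitPos F) :
    (vars F).card ≤ (unitVars F).card + (V2set F).card + wt w (softF F) := by
  set X := vars F \ (unitVars F ∪ V2set F)
  have hsoft : FU F X ⊆ softF F := by
    intro C hC
    obtain ⟨hCF, l, hl, hlX⟩ := Finset.mem_filter.1 hC
    obtain ⟨-, hlX⟩ := Finset.mem_sdiff.1 hlX
    refine Finset.mem_filter.2 ⟨hCF, fun hhard => hlX ?_⟩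
    rcases hhard with ⟨x, rfl⟩ | ⟨x, hx, y, hy, b, rfl⟩
    · rw [Finset.mem_singleton.1 hl]
      exact Finset.mem_union_left _ (hpos.mem_unitVars.2 hCF)
    · rcases Finset.mem_insert.1 hl with rfl | hl
      · exact Finset.mem_union_left _ hx
      · rw [Finset.mem_singleton.1 hl]
        exact Finset.mem_union_right _
          (mem_V2set.2 ⟨hy, x, hx, !b, by rwa [pairClause, Bool.not_not]⟩)
  calc (vars F).card ≤ X.card + (unitVars F ∪ V2set F).card :=
        Finset.card_le_card_sdiff_add_card
    _ ≤ wt w (softF F) + ((unitVars F).card + (V2set F).card) :=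
        add_le_add ((hexp X Finset.sdiff_subset).trans (Finset.sum_le_sum_of_subset hsoft))
          (Finset.card_union_le _ _)
    _ = _ := add_comm _ _

lemma Expanding.exists_unsatWt_le_of_unitPos (hexp : Expanding F w) (hF : IsCNF F)
    (hpos : UnitPos F) (h3 : Sat3 F) (hw : ∀ C ∈ F, 0 < w C) :
    ∃ τ, (unsatWt w τ F : ℝ) + 2 / 453 * ((vars F).card : ℝ) ≤ (wt w F : ℝ) / 3 := by
  obtain ⟨τ₁, h₁⟩ := exists_unsatWt_add_card_unitVars_le hpos h3 hw
  obtain ⟨τ₂, h₂⟩ := exists_unsatWt_add_card_V2set_le hpos h3 hw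
  obtain ⟨τ₃, h₃⟩ := exists_unsatWt_add_soft_le w hF hpos h3
  have hcard : ((vars F).card : ℝ) ≤ _ := Nat.cast_le.2 (hexp.card_vars_le hpos)
  push_cast at hcard
  by_contra! hlt
  -- The three bounds are averaged with weights `12 / 453`, `9 / 453` and `432 / 453`.
  linarith [hlt τ₁, hlt τ₂, hlt τ₃]

end Formula

/-! ### Reversing polarities -/

section Polarity

variable {F : Finset Clause} {w : Clause → ℕ} {s : ℕ → Bool}

/-- Negation of all literals on variables `v` with `s v = true`. -/
def flipLit (s : ℕ → Bool) : Equiv.Perm (ℕ × Bool) :=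
  Function.Involutive.toPerm (fun l => (l.1, s l.1 ^^ l.2)) fun l => by simp

lemma flipLit_apply (s : ℕ → Bool) (l : ℕ × Bool) : flipLit s l = (l.1, s l.1 ^^ l.2) :=
  rfl

/-- The clause obtained by negating all literals on variables `v` with `s v = true`. -/
def flipClause (s : ℕ → Bool) : Equiv.Perm Clause := (flipLit s).finsetCongr

/-- The formula obtained by negating all literals on variables `v` with `s v = true`; it serves to
make all unit clauses positive. -/
def flipFormula (s : ℕ → Bool) (F : Finset Clause) : Finset Clause :=
  F.map (flipClause s).toEmbedding

lemma flipClause_apply (s : ℕ → Bool) (C : Clause) :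
    flipClause s C = C.map (flipLit s).toEmbedding :=
  rfl

lemma mem_flipClause {C : Clause} {v : ℕ} {b : Bool} :
    (v, b) ∈ flipClause s C ↔ (v, s v ^^ b) ∈ C :=
  Finset.mem_map_equiv

lemma mem_flipFormula {C : Clause} : C ∈ flipFormula s F ↔ ∃ D ∈ F, flipClause s D = C :=
  Finset.mem_map

lemma satC_flipClause {τ : ℕ → Bool} {C : Clause} :
    SatC τ (flipClause s C) ↔ SatC (fun v => s v ^^ τ v) C := by
  simp only [SatC, Prod.exists, mem_flipClause, exists_eq_right']

lemma fst_mem_flipClause {C : Clause} (p : ℕ → Prop) :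
    (∃ l ∈ flipClause s C, p l.1) ↔ ∃ l ∈ C, p l.1 := by
  simp only [flipClause_apply, Finset.mem_map, exists_exists_and_eq_and, Equiv.coe_toEmbedding,
    flipLit_apply]

lemma vars_flipFormula (s : ℕ → Bool) (F : Finset Clause) : vars (flipFormula s F) = vars F := by
  ext v
  simp only [mem_vars, mem_flipFormula, exists_exists_and_eq_and, fst_mem_flipClause (· = v)]

lemma FU_flipFormula (s : ℕ → Bool) (F : Finset Clause) (U : Finset ℕ) :
    FU (flipFormula s F) U = flipFormula s (FU F U) := by
  rw [FU, flipFormula, Finset.filter_map]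
  congr 1
  exact Finset.filter_congr fun C _ => fst_mem_flipClause (· ∈ U)

lemma wt_flipFormula (s : ℕ → Bool) (w : Clause → ℕ) (F : Finset Clause) :
    wt (w ∘ (flipClause s).symm) (flipFormula s F) = wt w F := by
  simp [wt, flipFormula]

lemma unsatWt_flipFormula (s : ℕ → Bool) (w : Clause → ℕ) (τ : ℕ → Bool) (F : Finset Clause) :
    unsatWt (w ∘ (flipClause s).symm) τ (flipFormula s F) = unsatWt w (fun v => s v ^^ τ v) F := by
  simp [unsatWt, flipFormula, satC_flipClause]

lemma IsCNF.flip (hF : IsCNF F) (s : ℕ → Bool) : IsCNF (flipFormula s F) := by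
  intro C hC
  obtain ⟨D, hD, rfl⟩ := mem_flipFormula.1 hC
  refine ⟨Finset.map_nonempty.2 (hF D hD).1, fun v => ?_⟩
  rw [mem_flipClause, mem_flipClause]
  cases s v
  · exact (hF D hD).2 v
  · exact fun h => (hF D hD).2 v h.symm

lemma Sat3.flip (h3 : Sat3 F) (s : ℕ → Bool) : Sat3 (flipFormula s F) := by
  simp only [Sat3, mem_flipFormula, forall_exists_index, and_imp, forall_apply_eq_imp_iff₂,
    satC_flipClause]
  intro C₁ h₁ C₂ h₂ C₃ h₃
  obtain ⟨τ, hτ⟩ := h3 C₁ h₁ C₂ h₂ C₃ h₃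
  exact ⟨fun v => s v ^^ τ v, by simpa using hτ⟩

lemma Expanding.flip (hexp : Expanding F w) (s : ℕ → Bool) :
    Expanding (flipFormula s F) (w ∘ (flipClause s).symm) := by
  simpa only [Expanding, vars_flipFormula, FU_flipFormula, wt_flipFormula] using hexp

lemma Sat3.unitPos_flipFormula (h3 : Sat3 F) :
    UnitPos (flipFormula (fun x => decide ({(x, false)} ∈ F)) F) := by
  intro C hC hcard
  obtain ⟨D, hD, rfl⟩ := mem_flipFormula.1 hC
  rw [flipClause_apply, Finset.card_map] at hcard
  obtain ⟨⟨x, b⟩, rfl⟩ := Finset.card_eq_one.1 hcard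
  have hpolarity : decide ({(x, false)} ∈ F) = !b := by
    cases b
    · simpa using hD
    · rw [Bool.not_true, decide_eq_false_iff_not]
      intro hneg
      obtain ⟨τ, hpos, hneg, -⟩ := h3 _ hD _ hneg _ hD
      rw [satC_singleton] at hpos hneg
      simp [hpos] at hneg
  exact ⟨x, by simp [flipClause_apply, flipLit_apply, hpolarity]⟩

lemma Expanding.exists_unsatWt_le (hexp : Expanding F w) (hF : IsCNF F) (h3 : Sat3 F)
    (hw : ∀ C ∈ F, 0 < w C) :
    ∃ τ, (unsatWt w τ F : ℝ) + 2 / 453 * ((vars F).card : ℝ) ≤ (wt w F : ℝ) / 3 := by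
  set s : ℕ → Bool := fun x => decide ({(x, false)} ∈ F)
  have hw' : ∀ C ∈ flipFormula s F, 0 < (w ∘ (flipClause s).symm) C := by
    intro C hC
    obtain ⟨D, hD, rfl⟩ := mem_flipFormula.1 hC
    simpa using hw D hD
  obtain ⟨τ, hτ⟩ := (hexp.flip s).exists_unsatWt_le_of_unitPos (hF.flip s)
    h3.unitPos_flipFormula (h3.flip s) hw'
  rw [unsatWt_flipFormula, vars_flipFormula, wt_flipFormula] at hτ
  exact ⟨_, hτ⟩

end Polarity

/-! ### Matching autarkies -/

section Autarky

variable {F G : Finset Clause} {w : Clause → ℕ} {U : Finset ℕ} {β : ℕ → Bool}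

/-- `β` restricted to `U` is an autarky of `F`: it satisfies every clause that contains a variable
of `U`. -/
def IsAutarky (F : Finset Clause) (U : Finset ℕ) (β : ℕ → Bool) : Prop :=
  ∀ C ∈ FU F U, ∃ l ∈ C, l.1 ∈ U ∧ β l.1 = l.2

/-- The excess of the number of variables in `U` over the weight of the clauses they occur in; a
formula is expanding if no set of its variables has positive deficiency. -/
noncomputable def deficiency (F : Finset Clause) (w : Clause → ℕ) (U : Finset ℕ) : ℤ :=
  U.card - wt w (FU F U)

lemma mem_FU {C : Clause} : C ∈ FU F U ↔ C ∈ F ∧ ∃ l ∈ C, l.1 ∈ U :=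
  Finset.mem_filter

lemma FU_subset (F : Finset Clause) (U : Finset ℕ) : FU F U ⊆ F :=
  Finset.filter_subset _ _

lemma wt_sdiff_add_wt (w : Clause → ℕ) (h : G ⊆ F) : wt w (F \ G) + wt w G = wt w F :=
  Finset.sum_sdiff h

lemma IsAutarky.unsatWt_piecewise (hβ : IsAutarky F U β) (w : Clause → ℕ) (γ : ℕ → Bool) :
    unsatWt w (U.piecewise β γ) F = unsatWt w γ (F \ FU F U) := by
  have htouched : ∀ C ∈ FU F U, SatC (U.piecewise β γ) C := by
    intro C hC
    obtain ⟨l, hl, hlU, hlβ⟩ := hβ C hC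
    exact ⟨l, hl, by rwa [Finset.piecewise_eq_of_mem _ _ _ hlU]⟩
  have huntouched : ∀ C ∈ F \ FU F U, (SatC (U.piecewise β γ) C ↔ SatC γ C) := by
    intro C hC
    obtain ⟨hCF, hCU⟩ := Finset.mem_sdiff.1 hC
    refine exists_congr fun l => and_congr_right fun hl => ?_
    rw [Finset.piecewise_eq_of_notMem _ _ _ fun hlU => hCU (mem_FU.2 ⟨hCF, l, hl, hlU⟩)]
  rw [unsatWt, ← Finset.sum_sdiff (FU_subset F U),
    Finset.sum_eq_zero fun C hC => if_pos (htouched C hC), add_zero]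
  exact Finset.sum_congr rfl fun C hC => if_congr (huntouched C hC) rfl rfl

lemma exists_forall_satisfied_on_of_card_le (h : ∀ H ⊆ G, H.card ≤ (vars H ∩ U).card) :
    ∃ β : ℕ → Bool, ∀ C ∈ G, ∃ l ∈ C, l.1 ∈ U ∧ β l.1 = l.2 := by
  have hall : ∀ H : Finset G, H.card ≤ (H.biUnion fun C => C.1.image Prod.fst ∩ U).card := by
    intro H
    have hvars : vars (H.map (Function.Embedding.subtype _)) ∩ U
        = H.biUnion fun C => C.1.image Prod.fst ∩ U := by
      rw [vars, Finset.sup_map, Finset.sup_eq_biUnion, Finset.biUnion_inter]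
      rfl
    rw [← hvars, ← Finset.card_map (Function.Embedding.subtype _)]
    exact h _ fun C hC => Finset.property_of_mem_map_subtype H hC
  obtain ⟨partner, hinj, hmatch⟩ := (Finset.all_card_le_biUnion_card_iff_exists_injective _).1 hall
  have hlit : ∀ C : G, ∃ b, (partner C, b) ∈ C.1 := by
    intro C
    obtain ⟨l, hl, hlm⟩ := Finset.mem_image.1 (Finset.mem_inter.1 (hmatch C)).1
    exact ⟨l.2, hlm ▸ hl⟩
  choose b hb using hlit
  exact ⟨Function.extend partner b fun _ => false, fun C hC =>
    ⟨_, hb ⟨C, hC⟩, (Finset.mem_inter.1 (hmatch _)).2, hinj.extend_apply _ _ _⟩⟩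

lemma card_le_card_vars_inter_of_deficiency_le (hw : ∀ C ∈ F, 0 < w C)
    (hmax : ∀ V ⊆ U, deficiency F w V ≤ deficiency F w U) {H : Finset Clause} (hH : H ⊆ FU F U) :
    H.card ≤ (vars H ∩ U).card := by
  have havoid : FU F (U \ vars H) ⊆ FU F U \ H := by
    intro C hC
    obtain ⟨hCF, l, hl, hlU⟩ := mem_FU.1 hC
    obtain ⟨hlU, hlH⟩ := Finset.mem_sdiff.1 hlU
    exact Finset.mem_sdiff.2 ⟨mem_FU.2 ⟨hCF, l, hl, hlU⟩, fun hCH => hlH (fst_mem_vars hCH hl)⟩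
  have hwt : wt w (FU F (U \ vars H)) ≤ wt w (FU F U \ H) := Finset.sum_le_sum_of_subset havoid
  have hsplit : wt w (FU F U \ H) + wt w H = wt w (FU F U) := wt_sdiff_add_wt w hH
  have hcardH : H.card ≤ wt w H := by
    rw [Finset.card_eq_sum_ones]
    exact Finset.sum_le_sum fun C hC => hw C (FU_subset F U (hH hC))
  have hcardU : (U \ vars H).card + (vars H ∩ U).card = U.card := by
    rw [Finset.inter_comm, Finset.card_sdiff_add_card_inter]
  have hdef := hmax _ (Finset.sdiff_subset (s := U) (t := vars H))
  rw [deficiency, deficiency] at hdef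
  omega

lemma FU_union (F : Finset Clause) (U V : Finset ℕ) :
    FU F (U ∪ V) = FU F U ∪ FU (F \ FU F U) V := by
  ext C
  simp only [mem_FU, Finset.mem_union, Finset.mem_sdiff, and_or_left, exists_or]
  grind

lemma deficiency_union_of_disjoint {V : Finset ℕ} (w : Clause → ℕ) (hUV : Disjoint U V) :
    deficiency F w (U ∪ V) = deficiency F w U + deficiency (F \ FU F U) w V := by
  have hdisj : Disjoint (FU F U) (FU (F \ FU F U) V) :=
    Finset.disjoint_sdiff.mono_right (FU_subset _ V)
  simp only [deficiency, FU_union, wt, Finset.sum_union hdisj, Finset.card_union_of_disjoint hUV]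
  push_cast
  ring

lemma disjoint_vars_sdiff_FU (F : Finset Clause) (U : Finset ℕ) :
    Disjoint U (vars (F \ FU F U)) := by
  rw [Finset.disjoint_left]
  intro v hv hv'
  obtain ⟨C, hC, l, hl, rfl⟩ := mem_vars.1 hv'
  obtain ⟨hCF, hCU⟩ := Finset.mem_sdiff.1 hC
  exact hCU (mem_FU.2 ⟨hCF, l, hl, hv⟩)

lemma expanding_sdiff_FU_of_deficiency_le (hU : U ⊆ vars F)
    (hmax : ∀ V ⊆ vars F, deficiency F w V ≤ deficiency F w U) : Expanding (F \ FU F U) w := by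
  intro X hX
  have hXF : X ⊆ vars F := hX.trans (vars_mono Finset.sdiff_subset)
  have hdef := hmax (U ∪ X) (Finset.union_subset hU hXF)
  rw [deficiency_union_of_disjoint w ((disjoint_vars_sdiff_FU F U).mono_right hX),
    add_le_iff_nonpos_right, deficiency] at hdef
  omega

lemma exists_isAutarky_expanding (hw : ∀ C ∈ F, 0 < w C) :
    ∃ U ⊆ vars F, (∃ β, IsAutarky F U β) ∧ Expanding (F \ FU F U) w := by
  obtain ⟨U, hU, hmax⟩ := Finset.exists_max_image (vars F).powerset (deficiency F w)
    ⟨∅, Finset.empty_mem_powerset _⟩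
  simp only [Finset.mem_powerset] at hU hmax
  exact ⟨U, hU, exists_forall_satisfied_on_of_card_le fun _ =>
    card_le_card_vars_inter_of_deficiency_le hw fun V hV => hmax V (hV.trans hU),
    expanding_sdiff_FU_of_deficiency_le hU hmax⟩

end Autarky

lemma IsCNF.mono {F G : Finset Clause} (hF : IsCNF F) (h : G ⊆ F) : IsCNF G :=
  fun C hC => hF C (h hC)

lemma Sat3.mono {F G : Finset Clause} (h3 : Sat3 F) (h : G ⊆ F) : Sat3 G :=
  fun C₁ h₁ C₂ h₂ C₃ h₃ => h3 C₁ (h h₁) C₂ (h h₂) C₃ (h h₃)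

theorem stmt19 (F : Finset Clause) (w : Clause → ℕ)
    (hF : IsCNF F) (hw : ∀ C ∈ F, 0 < w C) (h3 : Sat3 F) :
    ∃ U ⊆ vars F, ∃ τ : ℕ → Bool,
      (2:ℝ)/3 * wt w F + (1:ℝ)/3 * wt w (FU F U)
        + (2:ℝ)/453 * ((vars (F \ FU F U)).card : ℝ) ≤ (satWt w τ F : ℝ) := by
  obtain ⟨U, hU, ⟨β, hβ⟩, hexp⟩ := exists_isAutarky_expanding hw
  have hsub : F \ FU F U ⊆ F := Finset.sdiff_subset
  obtain ⟨γ, hγ⟩ := hexp.exists_unsatWt_le (hF.mono hsub) (h3.mono hsub) fun C hC => hw C (hsub hC)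
  refine ⟨U, hU, U.piecewise β γ, ?_⟩
  have hsat : (satWt w (U.piecewise β γ) F : ℝ) + unsatWt w γ (F \ FU F U) = wt w F := by
    rw [← hβ.unsatWt_piecewise w γ]
    exact_mod_cast satWt_add_unsatWt w (U.piecewise β γ) F
  have hwt : (wt w (F \ FU F U) : ℝ) + wt w (FU F U) = wt w F := by
    exact_mod_cast wt_sdiff_add_wt w (FU_subset F U)
  linarith
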